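/- For the polynomial f(x,y) = x³ + 3xy² + x²y² on ℝ², the stable set of the origin for the gradient flow ẋ = ∇f(x) has nonempty interior; that is, the set of points p ∈ ℝ² such that the solution of ẋ = ∇f(x) with x(0) = p is defined on [0,∞) and converges to 0 as t → ∞ has nonempty interior. In particular there are infinitely many nontrivial trajectories of this flow converging to the origin. -/

import Mathlib

open Metric Set Filter

/-- A nontrivial trajectory of the gradient flow `ẋ = ∇f(x)` converging to the origin:
a nonconstant C¹ curve `γ : [0,∞) → ℝⁿ \ {0}` with `γ' t = ∇f(γ t)` for all `t ≥ 0`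
and `γ t → 0` as `t → ∞`. -/
def IsGradientTrajectoryToOrigin {n : ℕ} (f : EuclideanSpace ℝ (Fin n) → ℝ)
    (γ : ℝ → EuclideanSpace ℝ (Fin n)) : Prop :=
  (∀ t ∈ Ici (0 : ℝ), γ t ≠ 0) ∧
  (∀ t ∈ Ici (0 : ℝ), HasDerivWithinAt γ (gradient f (γ t)) (Ici 0) t) ∧
  (∃ s ∈ Ici (0 : ℝ), ∃ t ∈ Ici (0 : ℝ), γ s ≠ γ t) ∧
  Tendsto γ atTop (nhds 0)

/-- The stable set of the origin for the flow `ẋ = ∇f(x)`. -/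
def gradientStableSet {n : ℕ} (f : EuclideanSpace ℝ (Fin n) → ℝ) :
    Set (EuclideanSpace ℝ (Fin n)) :=
  {x₀ | ∃ γ : ℝ → EuclideanSpace ℝ (Fin n), γ 0 = x₀ ∧
    (∀ t ∈ Ici (0 : ℝ), HasDerivWithinAt γ (gradient f (γ t)) (Ici 0) t) ∧
    Tendsto γ atTop (nhds 0)}



/-- Global existence for a bounded Lipschitz vector field. -/
theorem exists_global_solution {E : Type*} [NormedAddCommGroup E] [NormedSpace ℝ E]
    [CompleteSpace E] (v : E → E) (L K : NNReal) (hL : ∀ x, ‖v x‖ ≤ L) (hK : LipschitzWith K v)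
    (x : E) : ∃ γ : ℝ → E, γ 0 = x ∧ ∀ t, HasDerivAt γ (v (γ t)) t := by
  have loc : ∀ a : ℝ, ∃ α : ℝ → E, α 0 = x ∧ ∀ t ∈ Ioo (-a) a, HasDerivAt α (v (α t)) t := by
    intro a
    rcases le_or_gt a 0 with ha | ha
    · exact ⟨fun _ => x, rfl, fun t ht => by have := ht.1; have := ht.2; linarith⟩
    · have hpl : IsPicardLindelof (fun _ ↦ v) (tmin := -a) (tmax := a)
          ⟨0, by constructor <;> linarith⟩ x (L * a.toNNReal) 0 L K := by
        apply IsPicardLindelof.of_time_independent (fun y _ => hL y) hK.lipschitzOnWith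
        simp [ha.le]
      obtain ⟨α, h0, h1⟩ := hpl.exists_eq_forall_mem_Icc_hasDerivWithinAt₀
      exact ⟨α, h0, fun t ht => (h1 t ⟨ht.1.le, ht.2.le⟩).hasDerivAt (Icc_mem_nhds ht.1 ht.2)⟩
  choose γ h0 h1 using loc
  have key : ∀ a b t, 0 < a → a ≤ b → t ∈ Ioo (-a) a → γ a t = γ b t := by
    intro a b t ha hab ht
    refine ODE_solution_unique_of_mem_Ioo (v := fun _ => v) (s := fun _ => univ) (K := K)
      (t₀ := 0) (a := -a) (b := a)
      (fun _ _ => hK.lipschitzOnWith) ⟨by linarith, ha⟩ (fun t ht => ⟨h1 a t ht, trivial⟩)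
      (fun t ht => ⟨h1 b t ⟨by linarith [ht.1], by linarith [ht.2]⟩, trivial⟩)
      (by rw [h0, h0]) ht
  have mem : ∀ t : ℝ, t ∈ Ioo (-(|t| + 1)) (|t| + 1) := fun t => abs_lt.mp (lt_add_one _)
  refine ⟨fun t => γ (|t| + 1) t, h0 _, fun t => ?_⟩
  refine (h1 (|t| + 1) t (mem t)).congr_of_eventuallyEq ?_
  filter_upwards [Ioo_mem_nhds (mem t).1 (mem t).2] with s hs
  rcases le_total (|s| + 1) (|t| + 1) with h | h
  · exact key _ _ _ (by positivity) h (mem s)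
  · exact (key _ _ _ (by positivity) h hs).symm

theorem hasDerivAt_coords {g : ℝ → EuclideanSpace ℝ (Fin 2)} {g' : EuclideanSpace ℝ (Fin 2)}
    {t : ℝ} : HasDerivAt g g' t ↔ ∀ i, HasDerivAt (fun s => g s i) (g' i) t := by
  rw [hasDerivAt_iff_hasFDerivAt, ← hasFDerivWithinAt_univ, hasFDerivWithinAt_euclidean]
  refine forall_congr' fun i => ?_
  rw [hasFDerivWithinAt_univ, hasDerivAt_iff_hasFDerivAt]
  apply iff_of_eq
  congr 1

/-- The explicit gradient. -/
noncomputable def gradF (p : EuclideanSpace ℝ (Fin 2)) : EuclideanSpace ℝ (Fin 2) :=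
  !₂[3 * p 0 ^ 2 + 3 * p 1 ^ 2 + 2 * p 0 * p 1 ^ 2, 6 * p 0 * p 1 + 2 * p 0 ^ 2 * p 1]

theorem gradient_eq_gradF :
    gradient (fun p : EuclideanSpace ℝ (Fin 2) =>
      (p 0) ^ 3 + 3 * p 0 * (p 1) ^ 2 + (p 0) ^ 2 * (p 1) ^ 2) = gradF := by
  apply gradient_eq
  intro p
  rw [hasGradientAt_iff_hasFDerivAt]
  have h0 : HasFDerivAt (fun q : EuclideanSpace ℝ (Fin 2) => q 0)
      (EuclideanSpace.proj 0 : EuclideanSpace ℝ (Fin 2) →L[ℝ] ℝ) p :=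
    (EuclideanSpace.proj 0 : EuclideanSpace ℝ (Fin 2) →L[ℝ] ℝ).hasFDerivAt
  have h1 : HasFDerivAt (fun q : EuclideanSpace ℝ (Fin 2) => q 1)
      (EuclideanSpace.proj 1 : EuclideanSpace ℝ (Fin 2) →L[ℝ] ℝ) p :=
    (EuclideanSpace.proj 1 : EuclideanSpace ℝ (Fin 2) →L[ℝ] ℝ).hasFDerivAt
  refine (((h0.pow 3).add ((h0.const_mul 3).mul (h1.pow 2))).add
    ((h0.pow 2).mul (h1.pow 2))).congr_fderiv ?_
  ext q
  simp [gradF, PiLp.inner_apply, Fin.sum_univ_two]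
  ring

theorem contDiff_gradF : ContDiff ℝ 1 gradF := by
  rw [contDiff_euclidean]
  intro i
  have h : ∀ j : Fin 2, ContDiff ℝ 1 (fun q : EuclideanSpace ℝ (Fin 2) => q j) := fun j =>
    (EuclideanSpace.proj j : EuclideanSpace ℝ (Fin 2) →L[ℝ] ℝ).contDiff
  have a := h 0
  have b := h 1
  fin_cases i
  · simp only [gradF]
    simp
    fun_prop
  · simp only [gradF]
    simp
    fun_prop

/-- A global curve solving the gradient equation cut off outside of a large ball. -/
theorem exists_cutoff_curve (p : EuclideanSpace ℝ (Fin 2)) :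
    ∃ (χ : EuclideanSpace ℝ (Fin 2) → ℝ) (γ : ℝ → EuclideanSpace ℝ (Fin 2)),
      Continuous χ ∧ (∀ q, ‖q‖ ≤ 2 → χ q = 1) ∧ γ 0 = p ∧
      ∀ t, HasDerivAt γ (χ (γ t) • gradF (γ t)) t := by
  let χ : ContDiffBump (0 : EuclideanSpace ℝ (Fin 2)) := ⟨2, 3, by norm_num, by norm_num⟩
  have hc : HasCompactSupport (fun q => χ q • gradF q) := χ.hasCompactSupport.smul_right
  have hd : ContDiff ℝ 1 (fun q => χ q • gradF q) := χ.contDiff.smul contDiff_gradF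
  obtain ⟨K, hK⟩ := ContDiff.lipschitzWith_of_hasCompactSupport hc hd (by norm_num)
  obtain ⟨C, hC⟩ := hc.exists_bound_of_continuous hd.continuous
  obtain ⟨γ, h0, h1⟩ := exists_global_solution _ C.toNNReal K
    (fun x => (hC x).trans (Real.le_coe_toNNReal C)) hK p
  exact ⟨χ, γ, χ.continuous, fun q hq => χ.one_of_mem_closedBall (by simpa [χ] using hq), h0, h1⟩

theorem mem_stable (p : EuclideanSpace ℝ (Fin 2)) (hp1 : -1 < p 0) (hp0 : p 0 < 0)
    (hpw : p 1 ^ 2 < p 0 ^ 2) :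
    p ∈ gradientStableSet (fun p : EuclideanSpace ℝ (Fin 2) =>
        (p 0) ^ 3 + 3 * p 0 * (p 1) ^ 2 + (p 0) ^ 2 * (p 1) ^ 2) := by
  obtain ⟨χ, γ, hχ, hχ1, h0, hγ⟩ := exists_cutoff_curve p
  have hγc : Continuous γ := continuous_iff_continuousAt.2 fun t => (hγ t).continuousAt
  have hcoord := fun t => hasDerivAt_coords.1 (hγ t)
  set x : ℝ → ℝ := fun t => γ t 0 with hx
  set y : ℝ → ℝ := fun t => γ t 1 with hy
  set c : ℝ → ℝ := fun t => χ (γ t) with hcdef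
  have hcc : Continuous c := hχ.comp hγc
  have dx : ∀ t, HasDerivAt x (c t * (3 * x t ^ 2 + 3 * y t ^ 2 + 2 * x t * y t ^ 2)) t := by
    intro t; simpa [gradF] using hcoord t 0
  have dy : ∀ t, HasDerivAt y (c t * (6 * x t * y t + 2 * x t ^ 2 * y t)) t := by
    intro t; simpa [gradF] using hcoord t 1
  have xc : Continuous x := continuous_iff_continuousAt.2 fun t => (dx t).continuousAt
  -- the cone `y² < x²` is invariant
  have hw : ∀ t, 0 < x t ^ 2 - y t ^ 2 := by
    have ac : Continuous (fun t => 6 * c t * x t) := by fun_prop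
    let A : ℝ → ℝ := fun t => ∫ s in (0 : ℝ)..t, 6 * c s * x s
    have dA : ∀ t, HasDerivAt A (6 * c t * x t) t := fun t =>
      ac.integral_hasStrictDerivAt 0 t |>.hasDerivAt
    let g : ℝ → ℝ := fun t => (x t ^ 2 - y t ^ 2) * Real.exp (-A t)
    have dg : ∀ t, HasDerivAt g 0 t := by
      intro t
      refine ((((dx t).pow 2).sub ((dy t).pow 2)).mul (dA t).neg.exp).congr_deriv ?_
      simp
      ring
    intro t
    have e : g t = g 0 := is_const_of_deriv_eq_zero (fun t => (dg t).differentiableAt)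
      (fun t => (dg t).deriv) t 0
    have p0 : 0 < g 0 := by
      refine mul_pos ?_ (Real.exp_pos _)
      simp only [hx, hy, h0]; linarith
    rw [← e] at p0
    exact (pos_iff_pos_of_mul_pos p0).2 (Real.exp_pos _)
  have hx0 : ∀ t, x t ≠ 0 := by
    intro t ht
    have := hw t
    rw [ht] at this
    nlinarith [sq_nonneg (y t)]
  have hxneg : ∀ t, x t < 0 := by
    intro t
    by_contra hcon
    push Not at hcon
    have h00 : x 0 ≤ 0 := by simp only [hx, h0]; exact hp0.le
    obtain ⟨s, hs⟩ := mem_range_of_exists_le_of_exists_ge xc ⟨0, h00⟩ ⟨t, hcon⟩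
    exact hx0 s hs
  have hnorm : ∀ t, -1 ≤ x t → ‖γ t‖ ≤ 2 := by
    intro t ht
    rw [EuclideanSpace.norm_eq, Fin.sum_univ_two]
    apply Real.sqrt_le_iff.2
    refine ⟨by norm_num, ?_⟩
    have h1 := hw t
    have h2 := hxneg t
    simp only [Real.norm_eq_abs, sq_abs]
    change x t ^ 2 + y t ^ 2 ≤ _
    nlinarith
  have hlow : ∀ t, 0 ≤ t → -1 ≤ x t := by
    intro t ht
    have := image_le_of_deriv_right_lt_deriv_boundary (a := 0) (b := t) (f := fun t => -x t)
      (B := fun _ => 1) (B' := fun _ => 0) xc.neg.continuousOn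
      (fun s _ => (dx s).neg.hasDerivWithinAt)
      (by simp only [hx, h0]; linarith) (fun s => hasDerivAt_const s 1)
      (by
        intro s hs hs1
        have e : x s = -1 := by linarith
        have : c s = 1 := hχ1 _ (hnorm s e.ge)
        rw [this, e]
        nlinarith [sq_nonneg (y s)]) (right_mem_Icc.2 ht)
    linarith
  have hc1 : ∀ t, 0 ≤ t → c t = 1 := fun t ht => hχ1 _ (hnorm t (hlow t ht))
  -- growth of `-1/x`
  have hgrow : ∀ t, 0 ≤ t → 3 * t ≤ -(x t)⁻¹ := by
    intro t ht
    have hm : MonotoneOn (fun t => -(x t)⁻¹ - 3 * t) (Ici 0) := by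
      have dh : ∀ s, HasDerivAt (fun t => -(x t)⁻¹ - 3 * t)
          (c s * (3 * x s ^ 2 + 3 * y s ^ 2 + 2 * x s * y s ^ 2) / x s ^ 2 - 3) s := by
        intro s
        refine (((dx s).inv (hx0 s)).neg.sub ((hasDerivAt_id s).const_mul 3)).congr_deriv ?_
        ring
      refine monotoneOn_of_deriv_nonneg (convex_Ici 0)
        (fun s _ => (dh s).continuousAt.continuousWithinAt)
        (fun s _ => (dh s).differentiableAt.differentiableWithinAt) ?_
      intro s hs
      rw [interior_Ici] at hs
      have hs' : 0 ≤ s := le_of_lt hs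
      rw [(dh s).deriv, hc1 s hs', sub_nonneg, le_div_iff₀ (by have := hx0 s; positivity)]
      nlinarith [sq_nonneg (y s), hlow s hs', mul_nonneg (sq_nonneg (y s))
        (by linarith [hlow s hs'] : 0 ≤ 1 + x s)]
    have h := hm (mem_Ici.2 le_rfl) (mem_Ici.2 ht) ht
    simp only at h
    have : (x 0)⁻¹ < 0 := inv_lt_zero.2 (hxneg 0)
    linarith
  have hxlim : Tendsto x atTop (nhds 0) := by
    have h1 : Tendsto (fun t => -(x t)⁻¹) atTop atTop := by
      refine tendsto_atTop_mono' atTop ?_ (tendsto_id.const_mul_atTop (by norm_num : (0:ℝ) < 3))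
      filter_upwards [eventually_ge_atTop 0] with t ht using hgrow t ht
    have h2 := h1.inv_tendsto_atTop.neg
    simp only [neg_zero] at h2
    refine h2.congr fun t => ?_
    simp [inv_neg]
  have hylim : Tendsto y atTop (nhds 0) := by
    refine squeeze_zero_norm (fun t => ?_) (by simpa using hxlim.norm)
    rw [Real.norm_eq_abs]
    exact sq_le_sq.1 (by linarith [hw t])
  refine ⟨γ, h0, fun t ht => ?_, ?_⟩
  · rw [gradient_eq_gradF]
    have := hγ t
    have e : χ (γ t) = 1 := hc1 t ht
    rw [e, one_smul] at this
    exact this.hasDerivWithinAt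
  · have : Tendsto (fun t => WithLp.toLp 2 (fun i => γ t i)) atTop
        (nhds (WithLp.toLp 2 (fun _ : Fin 2 => (0 : ℝ)))) := by
      refine ((PiLp.continuous_toLp 2 _).tendsto _).comp (tendsto_pi_nhds.2 fun i => ?_)
      fin_cases i
      · exact hxlim
      · exact hylim
    exact this

/-- Explicit trajectories on the negative `x`-axis. -/
noncomputable def axisCurve (n : ℕ) (t : ℝ) : EuclideanSpace ℝ (Fin 2) :=
  !₂[-((n : ℝ) + 1 + 3 * t)⁻¹, 0]

theorem axisCurve_traj (n : ℕ) :
    IsGradientTrajectoryToOrigin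
      (fun p => (p 0) ^ 3 + 3 * p 0 * (p 1) ^ 2 + (p 0) ^ 2 * (p 1) ^ 2) (axisCurve n) := by
  have hpos : ∀ t ∈ Ici (0 : ℝ), 0 < (n : ℝ) + 1 + 3 * t := by
    intro t ht
    have : (0 : ℝ) ≤ t := ht
    positivity
  refine ⟨fun t ht h => ?_, fun t ht => ?_, ⟨0, mem_Ici.2 le_rfl, 1, mem_Ici.2 zero_le_one, ?_⟩, ?_⟩
  · have h0 := congrArg (fun q : EuclideanSpace ℝ (Fin 2) => q 0) h
    have := (hpos t ht).ne'
    simp [axisCurve] at h0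
    exact this h0
  · rw [gradient_eq_gradF]
    apply HasDerivAt.hasDerivWithinAt
    rw [hasDerivAt_coords]
    intro i
    have hl : HasDerivAt (fun t : ℝ => (n : ℝ) + 1 + 3 * t) 3 t := by
      simpa using ((hasDerivAt_id t).const_mul 3).const_add ((n : ℝ) + 1)
    fin_cases i
    · have := (hl.inv (hpos t ht).ne').neg
      simp [axisCurve, gradF]
      refine this.congr_deriv ?_
      ring
    · simpa [axisCurve, gradF] using hasDerivAt_const t (0 : ℝ)
  · intro h
    have h0 := congrArg (fun q : EuclideanSpace ℝ (Fin 2) => q 0) h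
    simp [axisCurve] at h0
  · have hx : Tendsto (fun t : ℝ => -((n : ℝ) + 1 + 3 * t)⁻¹) atTop (nhds 0) := by
      have h1 : Tendsto (fun t : ℝ => (n : ℝ) + 1 + 3 * t) atTop atTop :=
        tendsto_atTop_add_const_left _ _ (tendsto_id.const_mul_atTop (by norm_num : (0:ℝ) < 3))
      simpa using h1.inv_tendsto_atTop.neg
    have : Tendsto (fun t => WithLp.toLp 2 (fun i => axisCurve n t i)) atTop
        (nhds (WithLp.toLp 2 (fun _ : Fin 2 => (0 : ℝ)))) := by
      refine ((PiLp.continuous_toLp 2 _).tendsto _).comp (tendsto_pi_nhds.2 fun i => ?_)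
      fin_cases i
      · simpa [axisCurve] using hx
      · simp [axisCurve]
    exact this

theorem axisCurve_image_le {m n : ℕ} (h : axisCurve m '' Ici 0 = axisCurve n '' Ici 0) :
    n ≤ m := by
  have : axisCurve m 0 ∈ axisCurve n '' Ici 0 := h ▸ mem_image_of_mem _ (mem_Ici.2 le_rfl)
  obtain ⟨t, ht, e⟩ := this
  have h0 := congrArg (fun q : EuclideanSpace ℝ (Fin 2) => q 0) e
  simp [axisCurve] at h0
  have : (0 : ℝ) ≤ t := ht
  have : (n : ℝ) ≤ m := by linarith
  exact_mod_cast this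

/-- **Example after Proposition `plik_7_3`.** For
`f(x,y) = x³ + 3xy² + x²y²` the stable set of the origin for the gradient flow
`ẋ = ∇f(x)` has nonempty interior; in particular there are infinitely many nontrivial
trajectories of this flow converging to the origin. -/
theorem statement10 :
    (interior (gradientStableSet
      (fun p : EuclideanSpace ℝ (Fin 2) =>
        (p 0) ^ 3 + 3 * p 0 * (p 1) ^ 2 + (p 0) ^ 2 * (p 1) ^ 2))).Nonempty ∧
    {S : Set (EuclideanSpace ℝ (Fin 2)) |
      ∃ γ : ℝ → EuclideanSpace ℝ (Fin 2),
        IsGradientTrajectoryToOrigin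
          (fun p => (p 0) ^ 3 + 3 * p 0 * (p 1) ^ 2 + (p 0) ^ 2 * (p 1) ^ 2) γ ∧
        S = γ '' Ici 0}.Infinite := by
  refine ⟨?_, ?_⟩
  · refine ⟨!₂[-(1 / 2), 0], mem_interior.2
      ⟨{p | -1 < p 0 ∧ p 0 < 0 ∧ p 1 ^ 2 < p 0 ^ 2}, fun p hp => mem_stable p hp.1 hp.2.1 hp.2.2,
        ?_, ?_⟩⟩
    · apply IsOpen.and
      · exact isOpen_lt (by fun_prop) (by fun_prop)
      · apply IsOpen.and
        · exact isOpen_lt (by fun_prop) (by fun_prop)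
        · exact isOpen_lt (by fun_prop) (by fun_prop)
    · simp
      norm_num
  · refine infinite_of_injective_forall_mem (f := fun n : ℕ => axisCurve n '' Ici 0) ?_ ?_
    · intro m n h
      exact le_antisymm (axisCurve_image_le h.symm) (axisCurve_image_le h)
    · intro n
      exact ⟨axisCurve n, axisCurve_traj n, rfl⟩
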